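/- Let (u, p) be a smooth (C^∞) solution of the steady incompressible Euler equations on U with u₁ > 0 everywhere (so B − p = |u|²/2 > 0). Then the quantity W satisfies D(W/G) + (1/(2(B − p)²)) · [(1, β₂, β₃)·(∇p × ∇B)] = 0 on U, where ∇p × ∇B denotes the cross product of the gradients of p and B. In particular, if B is constant on U then D(W/G) = 0. -/

import Mathlib

/-- Partial derivative in direction `i` of a scalar function on `ℝ³`. -/
noncomputable def pd (i : Fin 3) (f : (Fin 3 → ℝ) → ℝ) (x : Fin 3 → ℝ) : ℝ :=
  fderiv ℝ f x (Pi.single i 1)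

/-- The operator `D = ∂₁ + β₂ ∂₂ + β₃ ∂₃`. -/
noncomputable def Dop (β₂ β₃ : (Fin 3 → ℝ) → ℝ) (f : (Fin 3 → ℝ) → ℝ) (x : Fin 3 → ℝ) : ℝ :=
  pd 0 f x + β₂ x * pd 1 f x + β₃ x * pd 2 f x

lemma pd_add' {f g : (Fin 3 → ℝ) → ℝ} {x : Fin 3 → ℝ} (i : Fin 3)
    (hf : DifferentiableAt ℝ f x) (hg : DifferentiableAt ℝ g x) :
    pd i (fun y => f y + g y) x = pd i f x + pd i g x := by
  have h := (hf.hasFDerivAt.add hg.hasFDerivAt).fderiv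
  have h2 : fderiv ℝ (fun y => f y + g y) x = fderiv ℝ f x + fderiv ℝ g x := h
  simp [pd, h2]

lemma pd_sub' {f g : (Fin 3 → ℝ) → ℝ} {x : Fin 3 → ℝ} (i : Fin 3)
    (hf : DifferentiableAt ℝ f x) (hg : DifferentiableAt ℝ g x) :
    pd i (fun y => f y - g y) x = pd i f x - pd i g x := by
  have h := (hf.hasFDerivAt.sub hg.hasFDerivAt).fderiv
  have h2 : fderiv ℝ (fun y => f y - g y) x = fderiv ℝ f x - fderiv ℝ g x := h
  simp [pd, h2]

lemma pd_mul' {f g : (Fin 3 → ℝ) → ℝ} {x : Fin 3 → ℝ} (i : Fin 3)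
    (hf : DifferentiableAt ℝ f x) (hg : DifferentiableAt ℝ g x) :
    pd i (fun y => f y * g y) x = pd i f x * g x + f x * pd i g x := by
  have h := (hf.hasFDerivAt.mul hg.hasFDerivAt).fderiv
  have h2 : fderiv ℝ (fun y => f y * g y) x = f x • fderiv ℝ g x + g x • fderiv ℝ f x := h
  simp [pd, h2]
  ring

lemma pd_congr' {f g : (Fin 3 → ℝ) → ℝ} {U : Set (Fin 3 → ℝ)} (hU : IsOpen U)
    (h : ∀ y ∈ U, f y = g y) {x : Fin 3 → ℝ} (hx : x ∈ U) (i : Fin 3) :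
    pd i f x = pd i g x := by
  have h2 : f =ᶠ[nhds x] g := by
    filter_upwards [hU.mem_nhds hx] with y hy using h y hy
  simp [pd, h2.fderiv_eq]

lemma pd_div' {f g : (Fin 3 → ℝ) → ℝ} {x : Fin 3 → ℝ} (i : Fin 3)
    (hf : DifferentiableAt ℝ f x) (hg : DifferentiableAt ℝ g x) (h0 : g x ≠ 0) :
    pd i (fun y => f y / g y) x = (pd i f x * g x - f x * pd i g x) / g x ^ 2 := by
  have hd : DifferentiableAt ℝ (fun y => f y / g y) x := by
    simp only [div_eq_mul_inv]
    exact hf.mul (hg.inv h0)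
  have h := pd_mul' i hd hg
  have h2 : pd i (fun y => f y / g y * g y) x = pd i f x := by
    have : (fun y => f y / g y * g y) =ᶠ[nhds x] f := by
      filter_upwards [hg.continuousAt.eventually_ne h0] with y hy
      field_simp
    simp [pd, this.fderiv_eq]
  rw [h2] at h
  rw [h]
  field_simp
  ring

lemma pd_smooth {f : (Fin 3 → ℝ) → ℝ} {U : Set (Fin 3 → ℝ)} (hU : IsOpen U)
    (hf : ContDiffOn ℝ (⊤ : ℕ∞) f U) (i : Fin 3) : ContDiffOn ℝ (⊤ : ℕ∞) (pd i f) U := by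
  have h := hf.fderiv_of_isOpen (m := (⊤ : ℕ∞)) hU (by simp)
  exact h.clm_apply contDiffOn_const

lemma smooth_diff {f : (Fin 3 → ℝ) → ℝ} {U : Set (Fin 3 → ℝ)} (hU : IsOpen U)
    (hf : ContDiffOn ℝ (⊤ : ℕ∞) f U) {x : Fin 3 → ℝ} (hx : x ∈ U) :
    DifferentiableAt ℝ f x :=
  (hf.contDiffAt (hU.mem_nhds hx)).differentiableAt (by simp)

lemma pd_comm {f : (Fin 3 → ℝ) → ℝ} {U : Set (Fin 3 → ℝ)} (hU : IsOpen U)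
    (hf : ContDiffOn ℝ (⊤ : ℕ∞) f U) {x : Fin 3 → ℝ} (hx : x ∈ U) (i j : Fin 3) :
    pd i (pd j f) x = pd j (pd i f) x := by
  have hc := hf.contDiffAt (hU.mem_nhds hx)
  have hs : IsSymmSndFDerivAt ℝ f x := hc.isSymmSndFDerivAt (by
    simp only [minSmoothness_of_isRCLikeNormedField]
    exact WithTop.coe_le_coe.2 (le_top : (2 : ℕ∞) ≤ ⊤))
  have hd : DifferentiableAt ℝ (fderiv ℝ f) x :=
    (hc.fderiv_right (m := (⊤ : ℕ∞)) (by simp)).differentiableAt (by simp)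
  have key : ∀ a b : Fin 3, pd a (pd b f) x
      = fderiv ℝ (fderiv ℝ f) x (Pi.single a 1) (Pi.single b 1) := by
    intro a b
    have h := (hd.hasFDerivAt.clm_apply
      (hasFDerivAt_const (Pi.single b (1 : ℝ) : Fin 3 → ℝ) x)).fderiv
    have h2 : fderiv ℝ (pd b f) x = _ := h
    unfold pd at h2 ⊢
    rw [h2]
    simp
  rw [key, key]
  exact hs _ _

/-- the transport equation (5.16) for `W/G` for a smooth
incompressible Euler flow with `u₁ > 0`; in particular `D(W/G) = 0` when
the Bernoulli function is constant. -/
theorem incompressible_transport_equation_for_W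
    (U : Set (Fin 3 → ℝ)) (hU : IsOpen U)
    (u : Fin 3 → (Fin 3 → ℝ) → ℝ) (p : (Fin 3 → ℝ) → ℝ)
    (hu : ∀ i, ContDiffOn ℝ (⊤ : ℕ∞) (u i) U) (hp : ContDiffOn ℝ (⊤ : ℕ∞) p U)
    (hu1pos : ∀ x ∈ U, 0 < u 0 x)
    (hdiv : ∀ x ∈ U, pd 0 (u 0) x + pd 1 (u 1) x + pd 2 (u 2) x = 0)
    (hmom : ∀ i : Fin 3, ∀ x ∈ U,
      u 0 x * pd 0 (u i) x + u 1 x * pd 1 (u i) x + u 2 x * pd 2 (u i) x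
        + pd i p x = 0)
    (β₂ β₃ B G W : (Fin 3 → ℝ) → ℝ)
    (hβ₂ : β₂ = fun y => u 1 y / u 0 y) (hβ₃ : β₃ = fun y => u 2 y / u 0 y)
    (hB : B = fun y => (u 0 y ^ 2 + u 1 y ^ 2 + u 2 y ^ 2) / 2 + p y)
    (hG : G = fun y => 1 + β₂ y ^ 2 + β₃ y ^ 2)
    (hW : W = fun y => pd 1 β₃ y - pd 2 β₂ y + β₃ y * pd 0 β₂ y - β₂ y * pd 0 β₃ y) :
    (∀ x ∈ U,
      Dop β₂ β₃ (fun y => W y / G y) x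
        + 1 / (2 * (B x - p x) ^ 2) *
          ((pd 1 p x * pd 2 B x - pd 2 p x * pd 1 B x)
            + β₂ x * (pd 2 p x * pd 0 B x - pd 0 p x * pd 2 B x)
            + β₃ x * (pd 0 p x * pd 1 B x - pd 1 p x * pd 0 B x)) = 0) ∧
    ((∃ B₀ : ℝ, ∀ x ∈ U, B x = B₀) →
      ∀ x ∈ U, Dop β₂ β₃ (fun y => W y / G y) x = 0) := by
  have hdu : ∀ x ∈ U, ∀ i, DifferentiableAt ℝ (u i) x := fun x hx i => smooth_diff hU (hu i) hx
  have hdp : ∀ x ∈ U, DifferentiableAt ℝ p x := fun x hx => smooth_diff hU hp hx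
  have hda : ∀ x ∈ U, ∀ j i, DifferentiableAt ℝ (pd j (u i)) x :=
    fun x hx j i => smooth_diff hU (pd_smooth hU (hu i) j) hx
  have hdpp : ∀ x ∈ U, ∀ j, DifferentiableAt ℝ (pd j p) x :=
    fun x hx j => smooth_diff hU (pd_smooth hU hp j) hx
  -- `W / G` is the helicity density divided by `|u|²`
  have hWG : ∀ y ∈ U, W y / G y =
      (u 0 y * (pd 1 (u 2) y - pd 2 (u 1) y) + u 1 y * (pd 2 (u 0) y - pd 0 (u 2) y)
        + u 2 y * (pd 0 (u 1) y - pd 1 (u 0) y))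
      / (u 0 y * u 0 y + u 1 y * u 1 y + u 2 y * u 2 y) := by
    intro y hy
    have h0 := hu1pos y hy
    have hd := hdu y hy
    have hQ : 0 < u 0 y * u 0 y + u 1 y * u 1 y + u 2 y * u 2 y := by nlinarith [sq_nonneg (u 1 y), sq_nonneg (u 2 y), mul_pos h0 h0]
    have e2 : ∀ k, pd k β₂ y = (pd k (u 1) y * u 0 y - u 1 y * pd k (u 0) y) / u 0 y ^ 2 := by
      intro k; rw [hβ₂]; exact pd_div' k (hd 1) (hd 0) h0.ne'
    have e3 : ∀ k, pd k β₃ y = (pd k (u 2) y * u 0 y - u 2 y * pd k (u 0) y) / u 0 y ^ 2 := by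
      intro k; rw [hβ₃]; exact pd_div' k (hd 2) (hd 0) h0.ne'
    have hGy : G y = (u 0 y * u 0 y + u 1 y * u 1 y + u 2 y * u 2 y) / u 0 y ^ 2 := by
      rw [hG]; simp only [hβ₂, hβ₃]; field_simp
    have hWy : W y = (u 0 y * (pd 1 (u 2) y - pd 2 (u 1) y) + u 1 y * (pd 2 (u 0) y - pd 0 (u 2) y)
        + u 2 y * (pd 0 (u 1) y - pd 1 (u 0) y)) / u 0 y ^ 2 := by
      rw [hW]; simp only [e2, e3]; simp only [hβ₂, hβ₃]; field_simp; ring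
    rw [hGy, hWy, div_div_div_cancel_right₀ (pow_ne_zero 2 h0.ne')]
  have hBd : ∀ x ∈ U, ∀ k, pd k B x = u 0 x * pd k (u 0) x + u 1 x * pd k (u 1) x
      + u 2 x * pd k (u 2) x + pd k p x := by
    intro x hx k
    have hd := hdu x hx
    have h0 := hd 0
    have h1 := hd 1
    have h2 := hd 2
    have h3 := hdp x hx
    have hB' : B = fun y => (1 / 2 : ℝ) * (u 0 y * u 0 y + u 1 y * u 1 y + u 2 y * u 2 y) + p y := by
      rw [hB]; funext y; ring
    have hc : pd k (fun _ => (1 / 2 : ℝ)) x = 0 := by simp [pd]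
    rw [hB', pd_add' k (by fun_prop) (by fun_prop), pd_mul' k (by fun_prop) (by fun_prop),
      pd_add' k (by fun_prop) (by fun_prop), pd_add' k (by fun_prop) (by fun_prop),
      pd_mul' k h0 h0, pd_mul' k h1 h1, pd_mul' k h2 h2, hc]
    ring
  have main : ∀ x ∈ U,
      Dop β₂ β₃ (fun y => W y / G y) x
        + 1 / (2 * (B x - p x) ^ 2) *
          ((pd 1 p x * pd 2 B x - pd 2 p x * pd 1 B x)
            + β₂ x * (pd 2 p x * pd 0 B x - pd 0 p x * pd 2 B x)
            + β₃ x * (pd 0 p x * pd 1 B x - pd 1 p x * pd 0 B x)) = 0 := by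
    intro x hx
    have hpos := hu1pos x hx
    have hQ : 0 < u 0 x * u 0 x + u 1 x * u 1 x + u 2 x * u 2 x := by nlinarith [sq_nonneg (u 1 x), sq_nonneg (u 2 x), mul_pos hpos hpos]
    have h0 := hdu x hx 0
    have h1 := hdu x hx 1
    have h2 := hdu x hx 2
    have a := hda x hx
    have a12 := a 1 2
    have a21 := a 2 1
    have a20 := a 2 0
    have a02 := a 0 2
    have a01 := a 0 1
    have a10 := a 1 0
    -- differentiated momentum equations
    have dm : ∀ i k : Fin 3,
        pd k (u 0) x * pd 0 (u i) x + u 0 x * pd k (pd 0 (u i)) x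
        + (pd k (u 1) x * pd 1 (u i) x + u 1 x * pd k (pd 1 (u i)) x)
        + (pd k (u 2) x * pd 2 (u i) x + u 2 x * pd k (pd 2 (u i)) x)
        + pd k (pd i p) x = 0 := by
      intro i k
      have ai0 := a 0 i
      have ai1 := a 1 i
      have ai2 := a 2 i
      have hpi := hdpp x hx i
      have h := pd_congr' hU (hmom i) hx k
      have hc : pd k (fun _ => (0 : ℝ)) x = 0 := by simp [pd]
      rw [hc, pd_add' k (by fun_prop) hpi, pd_add' k (by fun_prop) (by fun_prop),
        pd_add' k (by fun_prop) (by fun_prop),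
        pd_mul' k h0 ai0, pd_mul' k h1 ai1, pd_mul' k h2 ai2] at h
      exact h
    have c : ∀ i j k, pd j (pd k (u i)) x = pd k (pd j (u i)) x :=
      fun i j k => pd_comm hU (hu i) hx j k
    have cp : ∀ j k, pd j (pd k p) x = pd k (pd j p) x := fun j k => pd_comm hU hp hx j k
    have dv := hdiv x hx
    -- vorticity equations
    have V0 : u 0 x * (pd 0 (pd 1 (u 2)) x - pd 0 (pd 2 (u 1)) x)
        + u 1 x * (pd 1 (pd 1 (u 2)) x - pd 1 (pd 2 (u 1)) x)
        + u 2 x * (pd 2 (pd 1 (u 2)) x - pd 2 (pd 2 (u 1)) x)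
        = (pd 1 (u 2) x - pd 2 (u 1) x) * pd 0 (u 0) x
        + (pd 2 (u 0) x - pd 0 (u 2) x) * pd 1 (u 0) x
        + (pd 0 (u 1) x - pd 1 (u 0) x) * pd 2 (u 0) x := by
      have e := dm 2 1
      have e' := dm 1 2
      rw [c 2 1 0, c 2 1 2, cp 1 2] at e
      rw [c 1 2 0, c 1 2 1] at e'
      linear_combination e - e' - (pd 1 (u 2) x - pd 2 (u 1) x) * dv
    have V1 : u 0 x * (pd 0 (pd 2 (u 0)) x - pd 0 (pd 0 (u 2)) x)
        + u 1 x * (pd 1 (pd 2 (u 0)) x - pd 1 (pd 0 (u 2)) x)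
        + u 2 x * (pd 2 (pd 2 (u 0)) x - pd 2 (pd 0 (u 2)) x)
        = (pd 1 (u 2) x - pd 2 (u 1) x) * pd 0 (u 1) x
        + (pd 2 (u 0) x - pd 0 (u 2) x) * pd 1 (u 1) x
        + (pd 0 (u 1) x - pd 1 (u 0) x) * pd 2 (u 1) x := by
      have e := dm 0 2
      have e' := dm 2 0
      rw [c 0 2 0, c 0 2 1, cp 2 0] at e
      rw [c 2 0 1, c 2 0 2] at e'
      linear_combination e - e' - (pd 2 (u 0) x - pd 0 (u 2) x) * dv
    have V2 : u 0 x * (pd 0 (pd 0 (u 1)) x - pd 0 (pd 1 (u 0)) x)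
        + u 1 x * (pd 1 (pd 0 (u 1)) x - pd 1 (pd 1 (u 0)) x)
        + u 2 x * (pd 2 (pd 0 (u 1)) x - pd 2 (pd 1 (u 0)) x)
        = (pd 1 (u 2) x - pd 2 (u 1) x) * pd 0 (u 2) x
        + (pd 2 (u 0) x - pd 0 (u 2) x) * pd 1 (u 2) x
        + (pd 0 (u 1) x - pd 1 (u 0) x) * pd 2 (u 2) x := by
      have e := dm 1 0
      have e' := dm 0 1
      rw [c 1 0 1, c 1 0 2, cp 0 1] at e
      rw [c 0 1 0, c 0 1 2] at e'
      linear_combination e - e' - (pd 0 (u 1) x - pd 1 (u 0) x) * dv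
    have hD : ∀ k, pd k (fun y => W y / G y) x =
        ((pd k (u 0) x * (pd 1 (u 2) x - pd 2 (u 1) x)
            + u 0 x * (pd k (pd 1 (u 2)) x - pd k (pd 2 (u 1)) x)
          + (pd k (u 1) x * (pd 2 (u 0) x - pd 0 (u 2) x)
            + u 1 x * (pd k (pd 2 (u 0)) x - pd k (pd 0 (u 2)) x))
          + (pd k (u 2) x * (pd 0 (u 1) x - pd 1 (u 0) x)
            + u 2 x * (pd k (pd 0 (u 1)) x - pd k (pd 1 (u 0)) x)))
          * (u 0 x * u 0 x + u 1 x * u 1 x + u 2 x * u 2 x)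
        - (u 0 x * (pd 1 (u 2) x - pd 2 (u 1) x) + u 1 x * (pd 2 (u 0) x - pd 0 (u 2) x)
          + u 2 x * (pd 0 (u 1) x - pd 1 (u 0) x))
          * (2 * (u 0 x * pd k (u 0) x + u 1 x * pd k (u 1) x + u 2 x * pd k (u 2) x)))
        / (u 0 x * u 0 x + u 1 x * u 1 x + u 2 x * u 2 x) ^ 2 := by
      intro k
      rw [pd_congr' hU hWG hx k, pd_div' k (by fun_prop) (by fun_prop) hQ.ne',
        pd_add' k (by fun_prop) (by fun_prop), pd_add' k (by fun_prop) (by fun_prop),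
        pd_add' k (by fun_prop) (by fun_prop), pd_add' k (by fun_prop) (by fun_prop),
        pd_mul' k h0 (by fun_prop), pd_mul' k h1 (by fun_prop), pd_mul' k h2 (by fun_prop),
        pd_mul' k h0 h0, pd_mul' k h1 h1, pd_mul' k h2 h2,
        pd_sub' k a12 a21, pd_sub' k a20 a02, pd_sub' k a01 a10]
      congr 1
      ring
    have hBp : B x - p x = (u 0 x * u 0 x + u 1 x * u 1 x + u 2 x * u 2 x) / 2 := by
      rw [hB]; ring
    have p0 : pd 0 p x = -(u 0 x * pd 0 (u 0) x + u 1 x * pd 1 (u 0) x + u 2 x * pd 2 (u 0) x) := by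
      linear_combination hmom 0 x hx
    have p1 : pd 1 p x = -(u 0 x * pd 0 (u 1) x + u 1 x * pd 1 (u 1) x + u 2 x * pd 2 (u 1) x) := by
      linear_combination hmom 1 x hx
    have p2 : pd 2 p x = -(u 0 x * pd 0 (u 2) x + u 1 x * pd 1 (u 2) x + u 2 x * pd 2 (u 2) x) := by
      linear_combination hmom 2 x hx
    have hb2 : β₂ x = u 1 x / u 0 x := by rw [hβ₂]
    have hb3 : β₃ x = u 2 x / u 0 x := by rw [hβ₃]
    unfold Dop
    rw [hD 0, hD 1, hD 2, hBp, hBd x hx 0, hBd x hx 1, hBd x hx 2, p0, p1, p2, hb2, hb3]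
    clear hD hBp p0 p1 p2 hb2 hb3 dm c cp
    set Q := u 0 x * u 0 x + u 1 x * u 1 x + u 2 x * u 2 x with hQd
    have hne := hQ.ne'
    have hune := hpos.ne'
    field_simp
    rw [hQd]
    linear_combination (u 0 x * u 0 x + u 1 x * u 1 x + u 2 x * u 2 x) *
      (u 0 x * V0 + u 1 x * V1 + u 2 x * V2)
  refine ⟨main, ?_⟩
  rintro ⟨B₀, hB₀⟩ x hx
  have hz : ∀ k, pd k B x = 0 := by
    intro k
    rw [pd_congr' hU hB₀ hx k]
    simp [pd]
  have h := main x hx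
  rw [hz 0, hz 1, hz 2] at h
  linear_combination h
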